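/- Let G be a finite group acting linearly on the sphere S^n via an orthogonal representation ρ : G → O(n+1), suppose S^n is G-connected and the fixed point set (S^n)^G is the great k-sphere S^k (the intersection of S^n with a (k+1)-dimensional pointwise-fixed linear subspace of ℝ^{n+1}), where 0 < k < n. If k is even, then TC^G(S^n) = 3. -/

import Mathlib

open Set unitInterval

namespace PaperTC

variable {G X : Type*}

/-- The orbit of `x` under the action `act`. -/
def orbit (act : G → X → X) (x : X) : Set X := {y | ∃ g, act g x = y}

/-- The fixed point set of the action `act`. -/
def fixedSet (act : G → X → X) : Set X := {x | ∀ g, act g x = x}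

/-- The fixed point set of a subset `S` of the acting group. -/
def fixedSetOf (act : G → X → X) (S : Set G) : Set X := {x | ∀ g ∈ S, act g x = x}

/-- `minCover P` is the least `k ≥ 1` satisfying `P k`, as an element of `ℕ∞`
(equal to `∞` if there is no such `k`). -/
noncomputable def minCover (P : ℕ → Prop) : ℕ∞ :=
  sInf {k : ℕ∞ | ∃ m : ℕ, k = m ∧ 1 ≤ m ∧ P m}

section Plain

variable (Y : Type*) [TopologicalSpace Y]

/-- `Y × Y` can be covered by `k` open sets each admitting a motion planner. -/
def TCcover (k : ℕ) : Prop :=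
  ∃ U : Fin k → Set (Y × Y),
    (∀ i, IsOpen (U i)) ∧ (⋃ i, U i) = univ ∧
    ∀ i, ∃ s : Y × Y → C(I, Y),
      ContinuousOn s (U i) ∧ ∀ p ∈ U i, s p 0 = p.1 ∧ s p 1 = p.2

/-- Topological complexity (non-reduced, possibly infinite). -/
noncomputable def TC : ℕ∞ := minCover (TCcover Y)

/-- `Y` can be covered by `k` open sets, each of which can be deformed within `Y`
to a point. -/
def catCover (k : ℕ) : Prop :=
  ∃ U : Fin k → Set Y,
    (∀ i, IsOpen (U i)) ∧ (⋃ i, U i) = univ ∧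
    ∀ i, ∃ H : Y × I → Y,
      ContinuousOn H (U i ×ˢ (univ : Set I)) ∧ (∀ x ∈ U i, H (x, 0) = x) ∧
      ∃ y₀, ∀ x ∈ U i, H (x, 1) = y₀

/-- Non-reduced Lusternik–Schnirelmann category. -/
noncomputable def cat : ℕ∞ := minCover (catCover Y)

end Plain

section Equivariant

variable [TopologicalSpace X] (act : G → X → X)

/-- `X × X` can be covered by `k` invariant open sets each admitting an
equivariant motion planner. -/
def eqTCcover (k : ℕ) : Prop :=
  ∃ U : Fin k → Set (X × X),
    (∀ i, IsOpen (U i)) ∧ (⋃ i, U i) = univ ∧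
    ∀ i, (∀ g p, p ∈ U i → (act g p.1, act g p.2) ∈ U i) ∧
      ∃ s : X × X → C(I, X),
        ContinuousOn s (U i) ∧
        (∀ p ∈ U i, s p 0 = p.1 ∧ s p 1 = p.2) ∧
        (∀ g p, p ∈ U i → ∀ t : I, s (act g p.1, act g p.2) t = act g (s p t))

/-- Equivariant topological complexity `TC_G` of Colman and Grant. -/
noncomputable def eqTC : ℕ∞ := minCover (eqTCcover act)

/-- `X × X` can be covered by `k` `(G × G)`-invariant open sets, each admitting a
`(G × G)`-equivariant section of `π^G : P X ×_{X/G} P X → X × X`; such a section is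
recorded by a pair of paths `s₁ p`, `s₂ p`, with the orbit of the endpoint of the first
equal to the orbit of the starting point of the second. -/
def invTCcover (k : ℕ) : Prop :=
  ∃ U : Fin k → Set (X × X),
    (∀ i, IsOpen (U i)) ∧ (⋃ i, U i) = univ ∧
    ∀ i, (∀ g₁ g₂ : G, ∀ p, p ∈ U i → (act g₁ p.1, act g₂ p.2) ∈ U i) ∧
      ∃ s₁ s₂ : X × X → C(I, X),
        ContinuousOn s₁ (U i) ∧ ContinuousOn s₂ (U i) ∧
        (∀ p ∈ U i, s₁ p 0 = p.1 ∧ s₂ p 1 = p.2 ∧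
          orbit act (s₁ p 1) = orbit act (s₂ p 0)) ∧
        (∀ g₁ g₂ : G, ∀ p, p ∈ U i → ∀ t : I,
          s₁ (act g₁ p.1, act g₂ p.2) t = act g₁ (s₁ p t) ∧
          s₂ (act g₁ p.1, act g₂ p.2) t = act g₂ (s₂ p t))

/-- Invariant topological complexity `TC^G` of Lubawski and Marzantowicz. -/
noncomputable def invTC : ℕ∞ := minCover (invTCcover act)

/-- The invariant open set `U` is `G`-compressible into `A`: the inclusion `U ↪ X` is
`G`-equivariantly homotopic to a `G`-map with values in `A`. -/
def GCompressible (A : Set X) (U : Set X) : Prop :=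
  (∀ g x, x ∈ U → act g x ∈ U) ∧
  ∃ H : X × I → X,
    ContinuousOn H (U ×ˢ (univ : Set I)) ∧ (∀ x ∈ U, H (x, 0) = x) ∧
    (∀ g x, x ∈ U → ∀ t : I, H (act g x, t) = act g (H (x, t))) ∧
    (∀ x ∈ U, H (x, 1) ∈ A)

/-- A `G`-categorical set: compressible into a single orbit. -/
def GCategorical (U : Set X) : Prop :=
  ∃ x₀ : X, GCompressible act (orbit act x₀) U

/-- `X` can be covered by `k` open `G`-categorical sets. -/
def catGCover (k : ℕ) : Prop :=
  ∃ U : Fin k → Set X,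
    (∀ i, IsOpen (U i)) ∧ (⋃ i, U i) = univ ∧ ∀ i, GCategorical act (U i)

/-- Equivariant Lusternik–Schnirelmann category `cat_G`. -/
noncomputable def catG : ℕ∞ := minCover (catGCover act)

/-- `X` can be covered by `k` open sets `G`-compressible into `{star}`. -/
def pointedCatGCover (star : X) (k : ℕ) : Prop :=
  ∃ U : Fin k → Set X,
    (∀ i, IsOpen (U i)) ∧ (⋃ i, U i) = univ ∧
    ∀ i, GCompressible act {star} (U i)

/-- The pointed equivariant category `_{{⋆}}cat_G(X)`. -/
noncomputable def pointedCatG (star : X) : ℕ∞ := minCover (pointedCatGCover act star)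

/-- `X` is `G`-contractible: the identity is `G`-homotopic to a map with values in a
single orbit. -/
def GContractible : Prop :=
  ∃ H : X × I → X,
    Continuous H ∧ (∀ x, H (x, 0) = x) ∧
    (∀ g x, ∀ t : I, H (act g x, t) = act g (H (x, t))) ∧
    ∃ x₀ : X, ∀ x, H (x, 1) ∈ orbit act x₀

end Equivariant

/-- The orbit space `X/G` with the quotient topology. -/
abbrev OrbitSpace (act : G → X → X) : Type _ := Quot (fun x y => ∃ g, act g x = y)

end PaperTC
namespace PaperTC

/-- The unit sphere `S^n ⊆ ℝ^{n+1}` (with the Euclidean metric). -/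
abbrev Sph (n : ℕ) : Set (EuclideanSpace ℝ (Fin (n + 1))) := Metric.sphere 0 1

/-- The action of `G` on the unit sphere `S^n` obtained by restricting an orthogonal
representation of `G` on `ℝ^{n+1}`. -/
noncomputable def sphereAct {G : Type*} [Monoid G] {n : ℕ}
    (ρ : G →* (EuclideanSpace ℝ (Fin (n + 1)) ≃ₗᵢ[ℝ] EuclideanSpace ℝ (Fin (n + 1)))) :
    G → ↥(Sph n) → ↥(Sph n) := fun g x =>
  ⟨ρ g x, mem_sphere_zero_iff_norm.mpr (by
    rw [(ρ g).norm_map]; exact mem_sphere_zero_iff_norm.mp x.2)⟩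

end PaperTC

open PaperTC

section
namespace PaperTC
noncomputable section
open MeasureTheory


def pd {ι : Type*} [Fintype ι] [DecidableEq ι] (j : ι) (f : (ι → ℝ) → ℝ) (z : ι → ℝ) : ℝ :=
  fderiv ℝ f z (Pi.single j 1)

section
variable {ι : Type*} [Fintype ι] [DecidableEq ι]

lemma pd_contDiff {f : (ι → ℝ) → ℝ} {n : ℕ} (hf : ContDiff ℝ (n+1 : ℕ) f) (j : ι) :
    ContDiff ℝ n (pd j f) := by
  unfold pd
  exact (hf.fderiv_right (m := n) (by norm_cast)).clm_apply contDiff_const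

lemma pd_symm {f : (ι → ℝ) → ℝ} (hf : ContDiff ℝ 2 f) (i j : ι) (z : ι → ℝ) :
    pd i (pd j f) z = pd j (pd i f) z := by
  have hs : IsSymmSndFDerivAt ℝ f z := hf.contDiffAt.isSymmSndFDerivAt (by simp)
  have hd : DifferentiableAt ℝ (fderiv ℝ f) z :=
    ((hf.fderiv_right (m := 1) (by norm_num)).differentiable (by norm_num)) z
  have key : ∀ a b : ι, pd a (pd b f) z = fderiv ℝ (fderiv ℝ f) z (Pi.single a 1) (Pi.single b 1) := by
    intro a b
    unfold pd
    rw [fderiv_clm_apply hd (by fun_prop)]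
    simp
  rw [key, key, hs.eq]

lemma pd_hcs {f : (ι → ℝ) → ℝ} (hf : HasCompactSupport f) (j : ι) :
    HasCompactSupport (pd j f) := hf.fderiv_apply ℝ _

lemma pd_prod (s : Finset ι) (u : ι → (ι → ℝ) → ℝ) (hu : ∀ i ∈ s, Differentiable ℝ (u i)) (j : ι)
    (z : ι → ℝ) :
    pd j (fun z => ∏ i ∈ s, u i z) z = ∑ l ∈ s, (∏ i ∈ s.erase l, u i z) * pd j (u l) z := by
  unfold pd
  rw [fderiv_finsetProd (fun i hi => hu i hi z)]
  simp

lemma int_by_parts {f g : (ι → ℝ) → ℝ} (hf : ContDiff ℝ 1 f) (hg : ContDiff ℝ 1 g)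
    (hc : HasCompactSupport f) (j : ι) :
    ∫ z, pd j f z * g z = - ∫ z, f z * pd j g z := by
  have c1 : Continuous (pd j f) := (pd_contDiff (n := 0) (by simpa using hf) j).continuous
  have c2 : Continuous (pd j g) := (pd_contDiff (n := 0) (by simpa using hg) j).continuous
  have := integral_mul_fderiv_eq_neg_fderiv_mul_of_integrable (μ := (volume : Measure (ι → ℝ)))
    (f := f) (g := g) (v := Pi.single j 1)
    ((c1.mul hg.continuous).integrable_of_hasCompactSupport ((pd_hcs hc j).mul_right))
    ((hf.continuous.mul c2).integrable_of_hasCompactSupport hc.mul_right)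
    ((hf.continuous.mul hg.continuous).integrable_of_hasCompactSupport hc.mul_right)
    (fun x _ => hf.differentiable (by norm_num) x) (fun x _ => hg.differentiable (by norm_num) x)
  unfold pd
  rw [this, neg_neg]

def jac (u : ι → (ι → ℝ) → ℝ) (z : ι → ℝ) : Matrix ι ι ℝ := Matrix.of fun j i => pd j (u i) z

lemma jac_det (u : ι → (ι → ℝ) → ℝ) (z : ι → ℝ) : (jac u z).det =
    ∑ sg : Equiv.Perm ι, ((Equiv.Perm.sign sg : ℤ) : ℝ) * ∏ i, pd (sg i) (u i) z := by
  rw [Matrix.det_apply']; rfl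

lemma cont_jac_det (u : ι → (ι → ℝ) → ℝ) (hu : ∀ i, ContDiff ℝ 2 (u i)) :
    Continuous fun z => (jac u z).det := by
  simp only [jac_det]
  refine continuous_finsetSum _ fun sg _ => continuous_const.mul ?_
  refine continuous_finsetProd _ fun i _ => ?_
  exact (pd_contDiff (n := 1) (by exact_mod_cast hu i) (sg i)).continuous

lemma int_jac_zero (u : ι → (ι → ℝ) → ℝ) (hu : ∀ i, ContDiff ℝ 2 (u i)) (i₀ : ι)
    (hc : HasCompactSupport (u i₀)) : ∫ z, (jac u z).det = 0 := by
  have hpd : ∀ i j, ContDiff ℝ 1 (pd j (u i)) := fun i j =>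
    by exact_mod_cast pd_contDiff (n := 1) (by exact_mod_cast hu i) j
  have hu1 : ContDiff ℝ 1 (u i₀) := (hu i₀).of_le (by norm_num)
  have hprod : ∀ sg : Equiv.Perm ι, ∀ s : Finset ι,
      ContDiff ℝ 1 fun z => ∏ i ∈ s, pd (sg i) (u i) z := fun sg s =>
    contDiff_prod fun i _ => hpd i (sg i)
  simp only [jac_det]
  have hsplit : ∀ sg : Equiv.Perm ι, ∀ z, ∏ i, pd (sg i) (u i) z =
      pd (sg i₀) (u i₀) z * ∏ i ∈ Finset.univ.erase i₀, pd (sg i) (u i) z := fun sg z =>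
    (Finset.mul_prod_erase _ _ (Finset.mem_univ i₀)).symm
  have hcont : ∀ sg : Equiv.Perm ι, Continuous fun z => ((Equiv.Perm.sign sg : ℤ) : ℝ) * ∏ i, pd (sg i) (u i) z :=
    fun sg => continuous_const.mul (hprod sg _).continuous
  have hcs : ∀ sg : Equiv.Perm ι, HasCompactSupport fun z => ((Equiv.Perm.sign sg : ℤ) : ℝ) * ∏ i, pd (sg i) (u i) z := by
    intro sg
    simp only [hsplit]
    exact ((pd_hcs hc (sg i₀)).mul_right).mul_left
  rw [integral_finsetSum _ fun sg _ => (hcont sg).integrable_of_hasCompactSupport (hcs sg)]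
  -- the terms after integration by parts
  let T : Equiv.Perm ι → ι → (ι → ℝ) → ℝ := fun sg l z =>
    (∏ i ∈ (Finset.univ.erase i₀).erase l, pd (sg i) (u i) z) * pd (sg i₀) (pd (sg l) (u l)) z
  have hT : ∀ sg l, Continuous (T sg l) := fun sg l =>
    (hprod sg _).continuous.mul
      (by
        have := pd_contDiff (n := 0) (by simpa using hpd l (sg l)) (sg i₀)
        exact this.continuous)
  have h1 : ∀ sg : Equiv.Perm ι, ∫ z, ((Equiv.Perm.sign sg : ℤ) : ℝ) * ∏ i, pd (sg i) (u i) z =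
      - ∑ l ∈ Finset.univ.erase i₀, ((Equiv.Perm.sign sg : ℤ) : ℝ) * ∫ z, u i₀ z * T sg l z := by
    intro sg
    rw [integral_const_mul]
    simp only [hsplit]
    rw [int_by_parts hu1 (hprod sg _) hc, ← Finset.mul_sum, ← integral_finsetSum]
    · rw [mul_neg]
      congr 3
      ext z
      rw [pd_prod _ _ (fun i _ => (hpd i (sg i)).differentiable (by norm_num)), Finset.mul_sum]
    · intro l _
      exact (hu1.continuous.mul (hT sg l)).integrable_of_hasCompactSupport hc.mul_right
  simp only [h1]
  rw [Finset.sum_neg_distrib, Finset.sum_comm, neg_eq_zero]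
  refine Finset.sum_eq_zero fun l hl => ?_
  have hl' : l ≠ i₀ := Finset.ne_of_mem_erase hl
  have hTs : ∀ sg : Equiv.Perm ι, T (sg * Equiv.swap i₀ l) l = T sg l := by
    intro sg
    ext z
    simp only [T]
    congr 1
    · refine Finset.prod_congr rfl fun i hi => ?_
      have h1 : i ≠ l := Finset.ne_of_mem_erase hi
      have h2 : i ≠ i₀ := Finset.ne_of_mem_erase (Finset.mem_of_mem_erase hi)
      rw [Equiv.Perm.mul_apply, Equiv.swap_apply_of_ne_of_ne h2 h1]
    · rw [Equiv.Perm.mul_apply, Equiv.Perm.mul_apply, Equiv.swap_apply_left,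
        Equiv.swap_apply_right]
      exact pd_symm (hu l) _ _ z
  have := Equiv.sum_comp (Equiv.mulRight (Equiv.swap i₀ l))
    (fun sg : Equiv.Perm ι => ((Equiv.Perm.sign sg : ℤ) : ℝ) * ∫ z, u i₀ z * T sg l z)
  simp only [Equiv.coe_mulRight, hTs, Equiv.Perm.sign_mul, Equiv.Perm.sign_swap hl'.symm] at this
  simp only [mul_neg, mul_one, Units.val_neg, Int.cast_neg, neg_mul, Finset.sum_neg_distrib] at this
  linarith

lemma jac_update (u : ι → (ι → ℝ) → ℝ) (i₀ : ι) (v w : (ι → ℝ) → ℝ) (hv : Differentiable ℝ v)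
    (hw : Differentiable ℝ w) (z : ι → ℝ) :
    (jac (Function.update u i₀ (fun z => v z - w z)) z).det =
      (jac (Function.update u i₀ v) z).det - (jac (Function.update u i₀ w) z).det := by
  have key : ∀ f, jac (Function.update u i₀ f) z = (jac u z).updateCol i₀ (fun j => pd j f z) := by
    intro f
    ext j i
    by_cases h : i = i₀
    · subst h; simp [jac]
    · simp [jac, h]
  rw [key, key, key]
  have : (fun j => pd j (fun z => v z - w z) z) = (fun j => pd j v z) + (-1 : ℝ) • (fun j => pd j w z) := by
    ext j
    simp only [pd, fderiv_fun_sub (hv z) (hw z)]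
    simp; ring
  rw [this, Matrix.det_updateCol_add, Matrix.det_updateCol_smul]
  ring

lemma int_jac_diff (f g : ι → (ι → ℝ) → ℝ) (hf : ∀ i, ContDiff ℝ 2 (f i))
    (hg : ∀ i, ContDiff ℝ 2 (g i)) (hc : ∀ i, HasCompactSupport (fun z => f i z - g i z)) :
    ∫ z, ((jac f z).det - (jac g z).det) = 0 := by
  let h : Finset ι → ι → (ι → ℝ) → ℝ := fun s i => if i ∈ s then f i else g i
  have hh : ∀ s i, ContDiff ℝ 2 (h s i) := fun s i => by
    simp only [h]; split_ifs; exacts [hf i, hg i]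
  have hint : ∀ s, Integrable (fun z => (jac (h s) z).det - (jac g z).det) ∧
      ∫ z, ((jac (h s) z).det - (jac g z).det) = 0 := by
    intro s
    induction s using Finset.induction_on with
    | empty => simp [h]
    | insert a s ha ih =>
      let d := Function.update (h s) a (fun z => f a z - g a z)
      have e1 : Function.update (h s) a (f a) = h (insert a s) := by
        ext i z
        by_cases hi : i = a
        · subst hi; simp [h]
        · simp [h, hi]
      have e2 : Function.update (h s) a (g a) = h s := by
        ext i z
        by_cases hi : i = a
        · subst hi; simp [h, ha]
        · simp [hi]
      have e3 : ∀ z, (jac d z).det = (jac (h (insert a s)) z).det - (jac (h s) z).det := by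
        intro z
        rw [jac_update _ _ _ _ ((hf a).differentiable (by norm_num)) ((hg a).differentiable (by norm_num)), e1, e2]
      have hd : ∀ i, ContDiff ℝ 2 (d i) := by
        intro i
        by_cases hi : i = a
        · subst hi; simpa [d] using (hf i).sub (hg i)
        · simpa [d, hi] using hh s i
      have hda : HasCompactSupport (d a) := by simpa [d] using hc a
      have hdi : Integrable (fun z => (jac d z).det) := by
        refine (cont_jac_det d hd).integrable_of_hasCompactSupport ?_
        refine HasCompactSupport.intro (hda.isCompact) fun z hz => ?_
        refine Matrix.det_eq_zero_of_column_eq_zero a fun j => ?_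
        have : z ∉ tsupport (pd j (d a)) := fun hz' => hz (tsupport_fderiv_apply_subset ℝ _ hz')
        show pd j (d a) z = 0
        exact image_eq_zero_of_notMem_tsupport this
      have e4 : (fun z => (jac (h (insert a s)) z).det - (jac g z).det) =
          fun z => (jac d z).det + ((jac (h s) z).det - (jac g z).det) := by
        ext z; rw [e3]; ring
      rw [e4]
      refine ⟨hdi.add ih.1, ?_⟩
      rw [integral_add hdi ih.1, ih.2, int_jac_zero d hd a hda, add_zero]
  have := (hint Finset.univ).2
  simpa [h] using this

end
end
end PaperTC
end

section
namespace PaperTC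
noncomputable section
open MeasureTheory


abbrev Ix (d : ℕ) : Type := (Fin 2 × Fin d) ⊕ Fin 2

def F0 {d : ℕ} : Ix d → (Ix d → ℝ) → ℝ
  | Sum.inl (a, i) => fun z => (1 - z (Sum.inr a)) * z (Sum.inl (0, i)) + z (Sum.inr a) * z (Sum.inl (1, i))
  | Sum.inr a => fun z => ∑ i, z (Sum.inl (a, i)) ^ 2 - 1

lemma F0_contDiff {d : ℕ} (i : Ix d) : ContDiff ℝ 2 (F0 i) := by
  rcases i with ⟨a, i⟩ | a
  · simp only [F0]; fun_prop
  · simp only [F0]; fun_prop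

/-- The inner product of the `a`-th point with the difference of the points. -/
def ipw {d : ℕ} (a : Fin 2) (z : Ix d → ℝ) : ℝ :=
  ∑ i, z (Sum.inl (a, i)) * (z (Sum.inl (1, i)) - z (Sum.inl (0, i)))

def M2 {d : ℕ} (z : Ix d → ℝ) : Matrix (Fin 2) (Fin 2) ℝ :=
  !![1 - z (Sum.inr 0), 1 - z (Sum.inr 1); z (Sum.inr 0), z (Sum.inr 1)]

lemma M2_det {d : ℕ} (z : Ix d → ℝ) : (M2 z).det = z (Sum.inr 1) - z (Sum.inr 0) := by
  rw [M2, Matrix.det_fin_two_of]; ring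

open scoped Kronecker in
lemma jac_F0 {d : ℕ} (z : Ix d → ℝ) : jac F0 z = Matrix.fromBlocks
    (M2 z ⊗ₖ (1 : Matrix (Fin d) (Fin d) ℝ))
    (Matrix.of fun (p : Fin 2 × Fin d) (a : Fin 2) => if p.1 = a then 2 * z (Sum.inl p) else 0)
    (Matrix.of fun (b : Fin 2) (p : Fin 2 × Fin d) =>
      if p.1 = b then z (Sum.inl (1, p.2)) - z (Sum.inl (0, p.2)) else 0)
    0 := by
  have hd : ∀ (j : Ix d), HasFDerivAt (fun z : Ix d → ℝ => z j) (ContinuousLinearMap.proj (R := ℝ) (φ := fun _ => ℝ) j) z :=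
    fun j => hasFDerivAt_apply j z
  have h1 : ∀ a i, HasFDerivAt (F0 (d := d) (Sum.inl (a, i))) _ z := fun a i =>
    (((hasFDerivAt_const (1 : ℝ) z).sub (hd (Sum.inr a))).mul (hd (Sum.inl (0, i)))).add
      ((hd (Sum.inr a)).mul (hd (Sum.inl (1, i))))
  have h2 : ∀ a, HasFDerivAt (F0 (d := d) (Sum.inr a)) _ z := fun a =>
    (HasFDerivAt.fun_sum (u := Finset.univ) fun i _ => (hd (Sum.inl (a, i))).pow 2).sub_const 1
  ext j i
  rcases i with ⟨a, i⟩ | a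
  · simp only [jac, pd, Matrix.of_apply]
    rw [(h1 a i).fderiv]
    rcases j with ⟨b, l⟩ | b
    · fin_cases a <;> fin_cases b <;> by_cases hl : l = i <;>
        simp [M2, hl, Pi.single_apply, eq_comm] <;>
        exact fun h => absurd h.symm hl
    · simp [Pi.single_apply]
      split_ifs <;> simp_all <;> ring
  · simp only [jac, pd, Matrix.of_apply]
    rw [(h2 a).fderiv]
    rcases j with ⟨b, l⟩ | b
    · by_cases hab : b = a
      · subst hab
        simp [Pi.single_apply]
      · simp [Pi.single_apply, hab, Ne.symm hab]
    · simp

open scoped Kronecker in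
lemma det_jac_F0_aux {d : ℕ} (z : Ix (d+1) → ℝ) (h : z (Sum.inr 1) - z (Sum.inr 0) ≠ 0) :
    (jac F0 z).det = 4 * (z (Sum.inr 1) - z (Sum.inr 0)) ^ d * (ipw 0 z * ipw 1 z) := by
  have hu : IsUnit (M2 z).det := by rw [M2_det]; exact h.isUnit
  have hdet : (M2 z ⊗ₖ (1 : Matrix (Fin (d+1)) (Fin (d+1)) ℝ)).det = (z (Sum.inr 1) - z (Sum.inr 0)) ^ (d+1) := by
    rw [Matrix.det_kronecker, M2_det]; simp
  have : Invertible (M2 z ⊗ₖ (1 : Matrix (Fin (d+1)) (Fin (d+1)) ℝ)) :=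
    Matrix.invertibleOfIsUnitDet _ (by rw [hdet]; exact (pow_ne_zero _ h).isUnit)
  rw [jac_F0, Matrix.det_fromBlocks₁₁, hdet, Matrix.invOf_eq_nonsing_inv, Matrix.inv_kronecker, inv_one]
  have e : (0 - (Matrix.of fun (b : Fin 2) (p : Fin 2 × Fin (d+1)) =>
      if p.1 = b then z (Sum.inl (1, p.2)) - z (Sum.inl (0, p.2)) else 0) *
      ((M2 z)⁻¹ ⊗ₖ (1 : Matrix (Fin (d+1)) (Fin (d+1)) ℝ)) *
      (Matrix.of fun (p : Fin 2 × Fin (d+1)) (a : Fin 2) => if p.1 = a then 2 * z (Sum.inl p) else 0)) =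
      (M2 z)⁻¹ * Matrix.diagonal (fun a => - 2 * ipw a z) := by
    ext b a
    rw [Matrix.mul_diagonal, Matrix.sub_apply, Matrix.mul_apply]
    simp only [Matrix.mul_apply, Fintype.sum_prod_type, Matrix.of_apply, Matrix.kroneckerMap_apply,
      Matrix.one_apply, ite_mul, zero_mul, mul_ite, mul_zero, mul_one, 
      Finset.sum_ite_eq', Finset.mem_univ, if_true, Matrix.zero_apply, Finset.sum_ite_irrel,
      Finset.sum_const_zero]
    simp only [ipw, Finset.mul_sum]
    rw [zero_sub, ← Finset.sum_neg_distrib]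
    refine Finset.sum_congr rfl fun i _ => ?_
    ring
  rw [e, Matrix.det_mul, Matrix.det_diagonal, Matrix.det_nonsing_inv, M2_det, Fin.prod_univ_two,
    Ring.inverse_eq_inv']
  field_simp
  ring

lemma ipw_cont {d : ℕ} (a : Fin 2) : Continuous (ipw (d := d) a) := by
  unfold ipw; fun_prop

lemma det_jac_F0 {d : ℕ} (z : Ix (d+1) → ℝ) :
    (jac F0 z).det = 4 * (z (Sum.inr 1) - z (Sum.inr 0)) ^ d * (ipw 0 z * ipw 1 z) := by
  by_cases h : z (Sum.inr 1) - z (Sum.inr 0) = 0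
  · let c : ℝ → (Ix (d+1) → ℝ) := fun s => Function.update z (Sum.inr 1) s
    have hc : Continuous c := continuous_const.update _ continuous_id
    have h1 : Continuous fun s => (jac F0 (c s)).det := (cont_jac_det _ F0_contDiff).comp hc
    have h2 : Continuous fun s => 4 * ((c s) (Sum.inr 1) - (c s) (Sum.inr 0)) ^ d * (ipw 0 (c s) * ipw 1 (c s)) := by
      have := (ipw_cont 0).comp hc
      have := (ipw_cont 1).comp hc
      simp only [Function.comp_def] at *
      fun_prop
    have := h1.ext_on (dense_compl_singleton (z (Sum.inr 0))) h2 (by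
      intro s hs
      apply det_jac_F0_aux
      simp only [c]
      simpa [sub_eq_zero] using hs)
    have := congrFun this (z (Sum.inr 1))
    simpa only [c, Function.update_eq_self] using this
  · exact det_jac_F0_aux z h
end
end PaperTC
end

section
namespace PaperTC
noncomputable section
open MeasureTheory


lemma exists_rho (ε : ℝ) (hε : 0 < ε) : ∃ r : ℝ → ℝ, ContDiff ℝ 2 r ∧
    (∀ s, ε ≤ |s| → deriv r s = 0) ∧ (∀ s, |s| < ε → 0 < deriv r s) := by
  let b : ContDiffBump (0 : ℝ) := ⟨ε / 2, ε, by positivity, by linarith⟩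
  have hb : Continuous b := b.continuous
  have hd : ∀ s, HasDerivAt (fun s => ∫ t in (0:ℝ)..s, b t) (b s) s := fun s =>
    hb.integral_hasStrictDerivAt 0 s |>.hasDerivAt
  have hd' : deriv (fun s => ∫ t in (0:ℝ)..s, b t) = b := funext fun s => (hd s).deriv
  refine ⟨fun s => ∫ t in (0:ℝ)..s, b t, ?_, ?_, ?_⟩
  · have : (2 : WithTop ℕ∞) = 1 + 1 := by norm_num
    rw [this, contDiff_succ_iff_deriv]
    refine ⟨fun s => (hd s).differentiableAt, by simp, ?_⟩
    rw [hd']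
    exact b.contDiff
  · intro s hs
    rw [hd']
    exact b.zero_of_le_dist (by simpa [Real.dist_eq] using hs)
  · intro s hs
    rw [hd']
    exact b.pos_of_mem_ball (by simpa [Real.dist_eq] using hs)

lemma exists_lb {W ι : Type*} [TopologicalSpace W] [Fintype ι] {K : Set W} (hK : IsCompact K)
    (f : ι → W → ℝ) (hf : ∀ i, Continuous (f i)) (h : ∀ z ∈ K, ∃ i, f i z ≠ 0) :
    ∃ ε : ℝ, 0 < ε ∧ ∀ z ∈ K, ∃ i, ε ≤ |f i z| := by
  have hc : Continuous fun z => ‖fun i => f i z‖ := by fun_prop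
  obtain ⟨ε, hε, h'⟩ := hK.exists_forall_le' (a := 0) hc.continuousOn (fun z hz => by
    obtain ⟨i, hi⟩ := h z hz
    exact norm_pos_iff.mpr fun h0 => hi (congrFun h0 i))
  refine ⟨ε, hε, fun z hz => ?_⟩
  by_contra! hcon
  exact absurd (h' z hz) (not_le.mpr ((pi_norm_lt_iff hε).mpr hcon))

lemma jac_comp {ι : Type*} [Fintype ι] [DecidableEq ι] (u : ι → (ι → ℝ) → ℝ)
    (hu : ∀ i, Differentiable ℝ (u i)) (r : ℝ → ℝ) (hr : Differentiable ℝ r) (z : ι → ℝ) :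
    (jac (fun i z => r (u i z)) z).det = (jac u z).det * ∏ i, deriv r (u i z) := by
  rw [← Matrix.det_diagonal, ← Matrix.det_mul]
  congr 1
  ext j i
  rw [Matrix.mul_diagonal]
  simp only [jac, pd, Matrix.of_apply]
  have := ((hr (u i z)).hasDerivAt.comp_hasFDerivAt z (hu i z).hasFDerivAt).fderiv
  simp only [Function.comp_def] at this
  rw [this]
  simp [mul_comm]

/-- Both points are unit vectors. -/
def OnS {d : ℕ} (z : Ix d → ℝ) : Prop := ∀ a, ∑ i, z (Sum.inl (a, i)) ^ 2 = 1

lemma half_of_comb {d : ℕ} {z : Ix d → ℝ} (hz : OnS z) (s : ℝ)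
    (h : ∀ i, (1 - s) * z (Sum.inl (0, i)) + s * z (Sum.inl (1, i)) = 0) : s = 1 / 2 := by
  have h1 : (1 - s) ^ 2 * ∑ i, z (Sum.inl (0, i)) ^ 2 = s ^ 2 * ∑ i, z (Sum.inl (1, i)) ^ 2 := by
    rw [Finset.mul_sum, Finset.mul_sum]
    refine Finset.sum_congr rfl fun i _ => ?_
    have : (1 - s) * z (Sum.inl (0, i)) = - (s * z (Sum.inl (1, i))) := by linarith [h i]
    rw [← mul_pow, this]; ring
  rw [hz 0, hz 1] at h1
  linarith

lemma F0_zero {d : ℕ} {z : Ix d → ℝ} (h : ∀ j, F0 j z = 0) : ipw 0 z * ipw 1 z < 0 := by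
  have hz : OnS z := fun a => by
    have := h (Sum.inr a)
    simp only [F0] at this
    linarith
  have ht : z (Sum.inr 0) = 1 / 2 := half_of_comb hz _ fun i => h (Sum.inl (0, i))
  have hxy : ∀ i, z (Sum.inl (1, i)) = - z (Sum.inl (0, i)) := fun i => by
    have := h (Sum.inl (0, i))
    simp only [F0, ht] at this
    linarith
  have e0 : ipw 0 z = -2 := by
    have : ipw 0 z = -2 * ∑ i, z (Sum.inl (0, i)) ^ 2 := by
      rw [ipw, Finset.mul_sum]
      exact Finset.sum_congr rfl fun i _ => by rw [hxy]; ring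
    rw [this, hz 0]; norm_num
  have e1 : ipw 1 z = 2 := by
    have : ipw 1 z = 2 * ∑ i, z (Sum.inl (0, i)) ^ 2 := by
      rw [ipw, Finset.mul_sum]
      exact Finset.sum_congr rfl fun i _ => by rw [hxy]; ring
    rw [this, hz 0]; norm_num
  rw [e0, e1]; norm_num

theorem core (k : ℕ) (hk : Even k) (Hc : Fin 2 → Fin (k+1) → (Ix (k+1) → ℝ) → ℝ)
    (hcont : ∀ a i, Continuous (Hc a i))
    (h0 : ∀ z, OnS z → ∀ a, z (Sum.inr a) ≤ 1/4 → ∀ i, Hc a i z = z (Sum.inl (0, i)))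
    (h1 : ∀ z, OnS z → ∀ a, 3/4 ≤ z (Sum.inr a) → ∀ i, Hc a i z = z (Sum.inl (1, i)))
    (h2 : ∀ z, OnS z → ∃ a i, Hc a i z ≠ 0) : False := by
  let θ : ContDiffBump (0 : Ix (k+1) → ℝ) := ⟨2, 3, by norm_num, by norm_num⟩
  have hθ0 : ∀ z, 0 ≤ θ z := fun z => θ.nonneg
  have hθ1 : ∀ z, θ z ≤ 1 := fun z => θ.le_one
  have hθc : Continuous θ := θ.continuous
  have hθs : ContDiff ℝ 2 θ := θ.contDiff
  have hθz : ∀ z, z ∉ Metric.closedBall (0 : Ix (k+1) → ℝ) 3 → θ z = 0 := fun z hz =>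
    θ.zero_of_le_dist (by simpa using (not_le.mp (by simpa using hz)).le)
  let Hx : Ix (k+1) → (Ix (k+1) → ℝ) → ℝ := fun j => Sum.elim (fun p => Hc p.1 p.2) (fun a => F0 (Sum.inr a)) j
  have hHx : ∀ j, Continuous (Hx j) := by
    rintro (⟨a, i⟩ | a)
    · exact hcont a i
    · exact (F0_contDiff (Sum.inr a)).continuous
  let Fc : Ix (k+1) → (Ix (k+1) → ℝ) → ℝ := fun j z => F0 j z + θ z * (Hx j z - F0 j z)
  have hFc : ∀ j, Continuous (Fc j) := fun j =>
    (F0_contDiff j).continuous.add (hθc.mul ((hHx j).sub (F0_contDiff j).continuous))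
  have claim1 : ∀ z, ∃ j, Fc j z ≠ 0 := by
    intro z
    by_contra! hz0
    have hz : OnS z := fun a => by
      have := hz0 (Sum.inr a)
      simp only [Fc, Hx, Sum.elim_inr, sub_self, mul_zero, add_zero] at this
      simp only [F0] at this
      linarith
    by_cases hall : ∀ a, 1/4 ≤ z (Sum.inr a) ∧ z (Sum.inr a) ≤ 3/4
    · have hθ : θ z = 1 := by
        refine θ.one_of_mem_closedBall ?_
        rw [mem_closedBall_zero_iff]
        refine (pi_norm_le_iff_of_nonneg (by norm_num [θ])).mpr ?_
        rintro (⟨a, i⟩ | a)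
        · have : z (Sum.inl (a, i)) ^ 2 ≤ 1 := by
            rw [← hz a]
            exact Finset.single_le_sum (f := fun i => z (Sum.inl (a, i)) ^ 2) (fun i _ => sq_nonneg _) (Finset.mem_univ i)
          have := (sq_le_one_iff_abs_le_one _).mp this
          rw [Real.norm_eq_abs]
          show _ ≤ (2 : ℝ)
          linarith
        · have := hall a
          rw [Real.norm_eq_abs, abs_le]
          show -(2 : ℝ) ≤ _ ∧ _ ≤ (2 : ℝ)
          constructor <;> linarith
      obtain ⟨a, i, hai⟩ := h2 z hz
      have := hz0 (Sum.inl (a, i))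
      simp only [Fc, hθ, Hx, Sum.elim_inl] at this
      exact hai (by linarith)
    · push Not at hall
      obtain ⟨a, ha⟩ := hall
      rcases lt_or_ge (z (Sum.inr a)) (1/4) with hlt | hge
      · have := half_of_comb hz ((1 - θ z) * z (Sum.inr a)) fun i => by
          have := hz0 (Sum.inl (a, i))
          simp only [Fc, Hx, Sum.elim_inl, h0 z hz a hlt.le i, F0] at this
          linarith
        nlinarith [hθ0 z, hθ1 z]
      · have hgt := ha hge
        have := half_of_comb hz ((1 - θ z) * z (Sum.inr a) + θ z) fun i => by
          have := hz0 (Sum.inl (a, i))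
          simp only [Fc, Hx, Sum.elim_inl, h1 z hz a hgt.le i, F0] at this
          linarith
        nlinarith [hθ0 z, hθ1 z]
  have hK : IsCompact (Metric.closedBall (0 : Ix (k+1) → ℝ) 3) := isCompact_closedBall _ _
  obtain ⟨ε₁, hε₁, hb1⟩ := exists_lb hK Fc hFc fun z _ => claim1 z
  obtain ⟨ε₂, hε₂, hb2⟩ := exists_lb (K := Metric.closedBall (0 : Ix (k+1) → ℝ) 3 ∩ {z | 0 ≤ ipw 0 z * ipw 1 z})
    (hK.inter_right (isClosed_le continuous_const ((ipw_cont 0).mul (ipw_cont 1)))) F0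
    (fun j => (F0_contDiff j).continuous) fun z hz => by
      by_contra! hcon
      exact absurd (F0_zero hcon) (not_lt.mpr hz.2)
  let ε := min (ε₁ / 2) ε₂
  have hε : 0 < ε := lt_min (by linarith) hε₂
  have hεle1 : 2 * ε ≤ ε₁ := by have := min_le_left (ε₁ / 2) ε₂; simp only [ε]; linarith
  have hεle2 : ε ≤ ε₂ := min_le_right _ _
  obtain ⟨r, hr, hrz, hrp⟩ := exists_rho ε hε
  have happ : ∀ j, ∃ P : (Ix (k+1) → ℝ) → ℝ, ContDiff ℝ 2 P ∧ ∀ z, |P z - Hx j z| < ε := by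
    intro j
    obtain ⟨g, hg, hg', -⟩ := (hHx j).exists_contDiff_approx 2 (ε := fun _ => ε) continuous_const fun _ => hε
    exact ⟨g, by exact_mod_cast hg, fun z => by simpa [Real.dist_eq] using hg' z⟩
  choose P hP hPa using happ
  let F : Ix (k+1) → (Ix (k+1) → ℝ) → ℝ := fun j z => F0 j z + θ z * (P j z - F0 j z)
  have hF : ∀ j, ContDiff ℝ 2 (F j) := fun j =>
    (F0_contDiff j).add (hθs.mul ((hP j).sub (F0_contDiff j)))
  have hF0 : ∀ j, ContDiff ℝ 2 (F0 (d := k+1) j) := F0_contDiff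
  let f : Ix (k+1) → (Ix (k+1) → ℝ) → ℝ := fun j z => r (F j z)
  let g : Ix (k+1) → (Ix (k+1) → ℝ) → ℝ := fun j z => r (F0 j z)
  have hf : ∀ j, ContDiff ℝ 2 (f j) := fun j => hr.comp (hF j)
  have hg : ∀ j, ContDiff ℝ 2 (g j) := fun j => hr.comp (hF0 j)
  have hfg : ∀ z, z ∉ Metric.closedBall (0 : Ix (k+1) → ℝ) 3 → ∀ j, f j z = g j z := fun z hz j => by
    simp [f, g, F, hθz z hz]
  have hint := int_jac_diff f g hf hg fun j => HasCompactSupport.intro hK fun z hz => by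
    rw [hfg z hz, sub_self]
  let D : (Ix (k+1) → ℝ) → ℝ := fun z => (jac f z).det - (jac g z).det
  have hDc : Continuous D := (cont_jac_det f hf).sub (cont_jac_det g hg)
  have hDz : ∀ z, z ∉ Metric.closedBall (0 : Ix (k+1) → ℝ) 3 → D z = 0 := by
    intro z hz
    have : jac f z = jac g z := by
      ext j i
      simp only [jac, pd, Matrix.of_apply]
      have : f i =ᶠ[nhds z] g i := by
        filter_upwards [Metric.isClosed_closedBall.isOpen_compl.mem_nhds hz] with y hy using hfg y hy i
      rw [this.fderiv_eq]
    simp only [D, this, sub_self]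
  have hrd : Differentiable ℝ r := hr.differentiable (by norm_num)
  have hdf : ∀ z ∈ Metric.closedBall (0 : Ix (k+1) → ℝ) 3, (jac f z).det = 0 := by
    intro z hz
    rw [jac_comp F (fun j => (hF j).differentiable (by norm_num)) r hrd]
    obtain ⟨j, hj⟩ := hb1 z hz
    rw [Finset.prod_eq_zero (Finset.mem_univ j), mul_zero]
    apply hrz
    have e : F j z = Fc j z + θ z * (P j z - Hx j z) := by simp only [F, Fc]; ring
    have e2 : |θ z * (P j z - Hx j z)| ≤ ε := by
      rw [abs_mul, abs_of_nonneg (hθ0 z)]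
      have := hPa j z
      have := abs_nonneg (P j z - Hx j z)
      nlinarith [hθ0 z, hθ1 z]
    have := abs_sub_abs_le_abs_sub (Fc j z) (-(θ z * (P j z - Hx j z)))
    rw [abs_neg, sub_neg_eq_add, ← e] at this
    linarith
  have hdg : ∀ z, (jac g z).det = 4 * (z (Sum.inr 1) - z (Sum.inr 0)) ^ k * (ipw 0 z * ipw 1 z) * ∏ i, deriv r (F0 i z) := by
    intro z
    rw [jac_comp F0 (fun j => (hF0 j).differentiable (by norm_num)) r hrd, det_jac_F0]
  have hDnn : 0 ≤ D := by
    intro z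
    show 0 ≤ D z
    by_cases hz : z ∈ Metric.closedBall (0 : Ix (k+1) → ℝ) 3
    · simp only [D]
      rw [hdf z hz, hdg z, zero_sub, Left.nonneg_neg_iff]
      by_cases hs : ∀ j, |F0 j z| < ε
      · have hneg : ipw 0 z * ipw 1 z < 0 := by
          by_contra! hcon
          obtain ⟨j, hj⟩ := hb2 z ⟨hz, hcon⟩
          linarith [hs j]
        have hp : 0 ≤ ∏ i, deriv r (F0 i z) := Finset.prod_nonneg fun i _ => (hrp _ (hs i)).le
        have hq : 0 ≤ 4 * (z (Sum.inr 1) - z (Sum.inr 0)) ^ k := by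
          have := hk.pow_nonneg (z (Sum.inr 1) - z (Sum.inr 0)); linarith
        exact mul_nonpos_of_nonpos_of_nonneg (mul_nonpos_of_nonneg_of_nonpos hq hneg.le) hp
      · push Not at hs
        obtain ⟨j, hj⟩ := hs
        rw [Finset.prod_eq_zero (Finset.mem_univ j) (hrz _ hj), mul_zero]
    · rw [hDz z hz]
  -- the witness
  let η := min (ε / 4) (1 / 4)
  have hη : 0 < η := lt_min (by linarith) (by norm_num)
  have hη1 : η ≤ ε / 4 := min_le_left _ _
  have hη2 : η ≤ 1 / 4 := min_le_right _ _
  let z₀ : Ix (k+1) → ℝ := Sum.elim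
    (fun p => if p.2 = 0 then (if p.1 = 0 then 1 else -1) else 0) (fun a => if a = 0 then 1/2 else 1/2 + η)
  have hz₀ : z₀ ∈ Metric.closedBall (0 : Ix (k+1) → ℝ) 3 := by
    rw [mem_closedBall_zero_iff]
    refine (pi_norm_le_iff_of_nonneg (by norm_num)).mpr ?_
    rintro (⟨a, i⟩ | a)
    · simp only [z₀, Sum.elim_inl]; split_ifs <;> norm_num
    · simp only [z₀, Sum.elim_inr, Real.norm_eq_abs, abs_le]; split_ifs <;> constructor <;> linarith
  have hsm : ∀ j, |F0 j z₀| < ε := by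
    rintro (⟨a, i⟩ | a)
    · fin_cases a
      · by_cases hi : i = 0 <;> simp [F0, z₀, hi, hε]
        norm_num [hε]
      · by_cases hi : i = 0 <;> simp [F0, z₀, hi, hε]
        rw [abs_lt]; constructor <;> linarith
    · fin_cases a <;> simp [F0, z₀, hε]
  have hi0 : ipw 0 z₀ = -2 := by
    simp [ipw, z₀]; norm_num
  have hi1 : ipw 1 z₀ = 2 := by
    simp [ipw, z₀]; norm_num
  have hne : D z₀ ≠ 0 := by
    simp only [D]
    rw [hdf z₀ hz₀, hdg, zero_sub, hi0, hi1]
    have e : z₀ (Sum.inr 1) - z₀ (Sum.inr 0) = η := by simp [z₀]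
    rw [e]
    have : 0 < ∏ i, deriv r (F0 i z₀) := Finset.prod_pos fun i _ => hrp _ (hsm i)
    have := pow_pos hη k
    have : 0 < 16 * η ^ k * ∏ i, deriv r (F0 i z₀) := by positivity
    intro hcon
    linarith
  have := hDc.integral_pos_of_hasCompactSupport_nonneg_nonzero (μ := volume)
    (HasCompactSupport.intro hK hDz) hDnn hne
  exact absurd hint this.ne'
end
end PaperTC
end

namespace PaperTC
noncomputable section

theorem exists_curry {Y X : Type*} [TopologicalSpace Y] [TopologicalSpace X] [Nonempty X]
    (U : Set Y) (f : Y → I → X)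
    (hf : ContinuousOn (fun q : Y × I => f q.1 q.2) (U ×ˢ univ)) :
    ∃ s : Y → C(I, X), ContinuousOn s U ∧ ∀ p ∈ U, ∀ t, s p t = f p t := by
  classical
  have hF : Continuous (fun q : U × I => f q.1 q.2) :=
    hf.comp_continuous (f := fun q : U × I => ((q.1 : Y), q.2)) (by fun_prop)
      (fun q => ⟨q.1.2, mem_univ _⟩)
  let F : C(U × I, X) := ⟨_, hF⟩
  refine ⟨fun p => if h : p ∈ U then F.curry ⟨p, h⟩ else ContinuousMap.const _ (Classical.arbitrary X), ?_, ?_⟩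
  · rw [continuousOn_iff_continuous_domRestrict]
    convert F.curry.continuous using 1
    ext p t
    simp
  · intro p hp t
    simp [hp, F]

variable {n : ℕ}

def nrm (a : Sph n) (w : EuclideanSpace ℝ (Fin (n + 1))) : Sph n :=
  open Classical in
  if h : w = 0 then a else ⟨‖w‖⁻¹ • w, by
    rw [mem_sphere_zero_iff_norm, norm_smul, norm_inv, norm_norm,
      inv_mul_cancel₀ (norm_ne_zero_iff.mpr h)]⟩

theorem nrm_cont (a : Sph n) : ContinuousOn (nrm a) {w | w ≠ 0} := by
  rw [Topology.IsInducing.subtypeVal.continuousOn_iff]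
  have : ContinuousOn (fun w : EuclideanSpace ℝ (Fin (n + 1)) => ‖w‖⁻¹ • w) {w | w ≠ 0} := by
    exact ContinuousOn.smul (f := fun w : EuclideanSpace ℝ (Fin (n + 1)) => ‖w‖⁻¹)
      (continuous_norm.continuousOn.inv₀ (fun w hw => norm_ne_zero_iff.mpr hw)) continuousOn_id
  refine this.congr (fun w hw => ?_)
  have hw' : w ≠ 0 := hw
  simp [nrm, hw']

theorem nrm_self (a x : Sph n) : nrm a (x : EuclideanSpace ℝ (Fin (n + 1))) = x := by
  have h1 : ‖(x : EuclideanSpace ℝ (Fin (n + 1)))‖ = 1 := mem_sphere_zero_iff_norm.mp x.2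
  have h0 : (x : EuclideanSpace ℝ (Fin (n + 1))) ≠ 0 := by
    intro h; rw [h] at h1; simp at h1
  apply Subtype.ext
  simp [nrm, h0, h1]

theorem contr {G : Type*} [Group G]
    (ρ : G →* (EuclideanSpace ℝ (Fin (n + 1)) ≃ₗᵢ[ℝ] EuclideanSpace ℝ (Fin (n + 1))))
    (a : Sph n) (ha : ∀ g, ρ g (a : EuclideanSpace ℝ (Fin (n + 1))) = a) :
    ∃ h : Sph n → C(I, Sph n),
      ContinuousOn h {x | (x : EuclideanSpace ℝ (Fin (n + 1))) ≠ -a} ∧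
      ∀ x : Sph n, (x : EuclideanSpace ℝ (Fin (n + 1))) ≠ -a →
        h x 0 = x ∧ h x 1 = a ∧ ∀ g, (sphereAct ρ g x : EuclideanSpace ℝ (Fin (n + 1))) ≠ -a ∧
          ∀ t, h (sphereAct ρ g x) t = sphereAct ρ g (h x t) := by
  have : Nonempty (Sph n) := ⟨a⟩
  obtain ⟨s, hs, hs'⟩ := exists_curry {x : Sph n | (x : EuclideanSpace ℝ (Fin (n + 1))) ≠ -a}
    (fun x t => nrm a ((1 - (t : ℝ)) • (x : EuclideanSpace ℝ (Fin (n + 1))) + (t : ℝ) • (a : EuclideanSpace ℝ (Fin (n + 1))))) (by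
      refine (nrm_cont a).comp (Continuous.continuousOn (by fun_prop)) ?_
      rintro ⟨x, t⟩ ⟨hx, -⟩ h0
      have h0 : (1 - (t : ℝ)) • (x : EuclideanSpace ℝ (Fin (n + 1))) + (t : ℝ) • (a : EuclideanSpace ℝ (Fin (n + 1))) = 0 := h0
      have hx1 : ‖(x : EuclideanSpace ℝ (Fin (n + 1)))‖ = 1 := mem_sphere_zero_iff_norm.mp x.2
      have ha1 : ‖(a : EuclideanSpace ℝ (Fin (n + 1)))‖ = 1 := mem_sphere_zero_iff_norm.mp a.2
      have h1 := eq_neg_of_add_eq_zero_left h0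
      have h2 := congrArg norm h1
      rw [norm_neg, norm_smul, norm_smul, hx1, ha1, Real.norm_of_nonneg t.2.1,
        Real.norm_of_nonneg (by linarith [t.2.2])] at h2
      have ht : (t : ℝ) = 1/2 := by linarith
      rw [ht] at h1
      apply hx
      have h3 : (1/2 : ℝ) • (x : EuclideanSpace ℝ (Fin (n + 1))) = (1/2 : ℝ) • (-(a : EuclideanSpace ℝ (Fin (n + 1)))) := by
        rw [smul_neg, ← h1]; norm_num
      exact smul_right_injective _ (by norm_num : (1/2 : ℝ) ≠ 0) h3)
  refine ⟨s, hs, fun x hx => ⟨?_, ?_, fun g => ?_⟩⟩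
  · rw [hs' x hx]; simp [nrm_self]
  · rw [hs' x hx]; simp [nrm_self]
  · have hg : (sphereAct ρ g x : EuclideanSpace ℝ (Fin (n + 1))) ≠ -a := by
      intro h
      apply hx
      apply (ρ g).injective
      rw [map_neg, ha]
      exact h
    refine ⟨hg, fun t => ?_⟩
    rw [hs' _ hg, hs' _ hx]
    have e : (1 - (t : ℝ)) • (sphereAct ρ g x : EuclideanSpace ℝ (Fin (n + 1))) + (t : ℝ) • (a : EuclideanSpace ℝ (Fin (n + 1)))
      = ρ g ((1 - (t : ℝ)) • (x : EuclideanSpace ℝ (Fin (n + 1))) + (t : ℝ) • (a : EuclideanSpace ℝ (Fin (n + 1)))) := by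
      rw [map_add, map_smul, map_smul, ha]; rfl
    rw [e]
    generalize ((1 - (t : ℝ)) • (x : EuclideanSpace ℝ (Fin (n + 1))) + (t : ℝ) • (a : EuclideanSpace ℝ (Fin (n + 1)))) = w
    apply Subtype.ext
    by_cases hw : w = 0
    · simp [nrm, hw, sphereAct, ha]
    · simp [nrm, hw, sphereAct]

theorem upper {G : Type*} [Group G]
    (ρ : G →* (EuclideanSpace ℝ (Fin (n + 1)) ≃ₗᵢ[ℝ] EuclideanSpace ℝ (Fin (n + 1))))
    (a : Fin 3 → Sph n) (hinj : Function.Injective a)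
    (ha : ∀ i g, ρ g (a i : EuclideanSpace ℝ (Fin (n + 1))) = a i) :
    invTCcover (sphereAct ρ) 3 := by
  choose h hc hh using fun i => contr ρ (a i) (ha i)
  refine ⟨fun i => {p | (p.1 : EuclideanSpace ℝ (Fin (n + 1))) ≠ -a i ∧ (p.2 : EuclideanSpace ℝ (Fin (n + 1))) ≠ -a i}, ?_, ?_, ?_⟩
  · intro i
    exact (isOpen_ne_fun (by fun_prop) (by fun_prop)).inter (isOpen_ne_fun (by fun_prop) (by fun_prop))
  · rw [eq_univ_iff_forall]
    intro p
    by_contra hp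
    simp only [mem_iUnion, mem_ofPred_eq, not_exists, not_and_or, not_not] at hp
    have inj : ∀ i j, ∀ v : EuclideanSpace ℝ (Fin (n + 1)), v = - a i → v = - a j → i = j := by
      intro i j v h1 h2
      apply hinj; apply Subtype.ext
      rw [h1] at h2; exact neg_injective h2
    rcases hp 0 with h0 | h0 <;> rcases hp 1 with h1 | h1 <;> rcases hp 2 with h2 | h2 <;>
    first
    | exact absurd (inj _ _ _ h0 h1) (by decide)
    | exact absurd (inj _ _ _ h0 h2) (by decide)
    | exact absurd (inj _ _ _ h1 h2) (by decide)
  · intro i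
    refine ⟨fun g₁ g₂ p hp => ⟨((hh i p.1 hp.1).2.2 g₁).1, ((hh i p.2 hp.2).2.2 g₂).1⟩,
      fun p => h i p.1, fun p => (h i p.2).comp ⟨σ, by fun_prop⟩, ?_, ?_, ?_, ?_⟩
    · exact (hc i).comp continuousOn_fst (fun p hp => hp.1)
    · have : ContinuousOn (fun p : Sph n × Sph n => h i p.2) {p | (p.1 : EuclideanSpace ℝ (Fin (n + 1))) ≠ -a i ∧ (p.2 : EuclideanSpace ℝ (Fin (n + 1))) ≠ -a i} :=
        (hc i).comp continuousOn_snd (fun p hp => hp.2)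
      exact (ContinuousMap.continuous_precomp _).comp_continuousOn this
    · intro p hp
      refine ⟨(hh i p.1 hp.1).1, ?_, ?_⟩
      · simp [(hh i p.2 hp.2).1]
      · simp [(hh i p.2 hp.2).2.1, (hh i p.1 hp.1).2.1]
    · intro g₁ g₂ p hp t
      exact ⟨((hh i p.1 hp.1).2.2 g₁).2 t, ((hh i p.2 hp.2).2.2 g₂).2 _⟩

theorem three_pts (V : Submodule ℝ (EuclideanSpace ℝ (Fin (n + 1)))) (k : ℕ) (hk : 0 < k)
    (φ : EuclideanSpace ℝ (Fin (k + 1)) →ₗᵢ[ℝ] EuclideanSpace ℝ (Fin (n + 1)))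
    (hφ : ∀ x, φ x ∈ V) : ∃ a : Fin 3 → Sph n, Function.Injective a ∧
      ∀ i, (a i : EuclideanSpace ℝ (Fin (n + 1))) ∈ V := by
  let i1 : Fin (k+1) := ⟨1, by omega⟩
  let b : Fin 3 → EuclideanSpace ℝ (Fin (k + 1)) :=
    ![EuclideanSpace.single 0 1, EuclideanSpace.single i1 1, - EuclideanSpace.single 0 1]
  have hb : ∀ i, ‖b i‖ = 1 := by
    intro i; fin_cases i <;> simp [b]
  have h01 : (0 : Fin (k+1)) ≠ i1 := by simp [i1, Fin.ext_iff]
  have e0 : b 0 0 = 1 := by simp [b]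
  have e1 : b 1 0 = 0 := by simp [b, h01]
  have e2 : b 2 0 = -1 := by simp [b]
  refine ⟨fun i => ⟨φ (b i), by rw [mem_sphere_zero_iff_norm, φ.norm_map, hb]⟩, ?_, fun i => hφ _⟩
  intro i j hij
  have h1 : φ (b i) = φ (b j) := congrArg Subtype.val hij
  have h2 : b i 0 = b j 0 := by rw [φ.injective h1]
  fin_cases i <;> fin_cases j <;> first | rfl | (exfalso; simp [e0, e1, e2] at h2; done) | (exfalso; simp [e0, e1, e2] at h2; linarith)

theorem exists_phi (V : Submodule ℝ (EuclideanSpace ℝ (Fin (n + 1)))) (k : ℕ)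
    (hV : Module.finrank ℝ V = k + 1) :
    ∃ φ : EuclideanSpace ℝ (Fin (k + 1)) →ₗᵢ[ℝ] EuclideanSpace ℝ (Fin (n + 1)),
      ∀ v, v ∈ V ↔ ∃ x, φ x = v := by
  let e := ((stdOrthonormalBasis ℝ V).reindex (finCongr hV)).repr.symm
  refine ⟨V.subtypeₗᵢ.comp e.toLinearIsometry, fun v => ⟨fun hv => ⟨e.symm ⟨v, hv⟩, by simp⟩, ?_⟩⟩
  rintro ⟨x, rfl⟩
  exact (e x).2

end
end PaperTC

namespace PaperTC
noncomputable section

theorem isClosed_OnS (d : ℕ) : IsClosed {z : Ix d → ℝ | OnS z} := by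
  have : {z : Ix d → ℝ | OnS z} = ⋂ a, {z : Ix d → ℝ | ∑ i, z (Sum.inl (a, i)) ^ 2 = 1} := by
    ext z; simp [OnS]
  rw [this]
  exact isClosed_iInter fun a => isClosed_eq (by fun_prop) (by fun_prop)

abbrev YS (d : ℕ) := {z : Ix d → ℝ // OnS z}

theorem cont_co {d : ℕ} (j : Ix d) : Continuous (fun z : YS d => z.1 j) :=
  (continuous_apply j).comp continuous_subtype_val

theorem ext_lemma (d : ℕ) (a : Fin 2) (A : Set (YS d)) (hA : IsClosed A)
    (K : YS d → Fin d → ℝ) (hK : ContinuousOn K A)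
    (hK0 : ∀ z ∈ A, z.1 (Sum.inr a) ≤ 1/4 → ∀ i, K z i = z.1 (Sum.inl (0, i)))
    (hK1 : ∀ z ∈ A, 3/4 ≤ z.1 (Sum.inr a) → ∀ i, K z i = z.1 (Sum.inl (1, i))) :
    ∃ H : Fin d → (Ix d → ℝ) → ℝ, (∀ i, Continuous (H i)) ∧
      (∀ z, OnS z → z (Sum.inr a) ≤ 1/4 → ∀ i, H i z = z (Sum.inl (0, i))) ∧
      (∀ z, OnS z → 3/4 ≤ z (Sum.inr a) → ∀ i, H i z = z (Sum.inl (1, i))) ∧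
      (∀ z ∈ A, ∀ i, H i z.1 = K z i) := by
  classical
  let h : YS d → Fin d → ℝ := fun z => if z ∈ A then K z else
    if z.1 (Sum.inr a) ≤ 1/4 then fun i => z.1 (Sum.inl (0, i)) else fun i => z.1 (Sum.inl (1, i))
  let B : Set (YS d) := {z | z.1 (Sum.inr a) ≤ 1/4}
  let C : Set (YS d) := {z | 3/4 ≤ z.1 (Sum.inr a)}
  have hB : IsClosed B := isClosed_le (cont_co _) continuous_const
  have hC : IsClosed C := isClosed_le continuous_const (cont_co _)
  have eA : ∀ z ∈ A, h z = K z := fun z hz => by simp [h, hz]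
  have eB : ∀ z ∈ B, h z = fun i => z.1 (Sum.inl (0, i)) := fun z hz => by
    have hz' : z.1 (Sum.inr a) ≤ 1/4 := hz
    by_cases hzA : z ∈ A
    · rw [eA z hzA]; ext i; exact hK0 z hzA hz' i
    · simp only [h, if_neg hzA, if_pos hz']
  have eC : ∀ z ∈ C, h z = fun i => z.1 (Sum.inl (1, i)) := fun z hz => by
    have hz' : 3/4 ≤ z.1 (Sum.inr a) := hz
    by_cases hzA : z ∈ A
    · rw [eA z hzA]; ext i; exact hK1 z hzA hz' i
    · have : ¬ (z.1 (Sum.inr a) ≤ 1/4) := by linarith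
      simp only [h, if_neg hzA, if_neg this]
  have cB : ContinuousOn h B := ContinuousOn.congr (f := fun (z : YS d) i => z.1 (Sum.inl (0, i)))
    (Continuous.continuousOn (continuous_pi fun i => cont_co _)) eB
  have cC : ContinuousOn h C := ContinuousOn.congr (f := fun (z : YS d) i => z.1 (Sum.inl (1, i)))
    (Continuous.continuousOn (continuous_pi fun i => cont_co _)) eC
  have cA : ContinuousOn h A := hK.congr eA
  have cT : ContinuousOn h (A ∪ (B ∪ C)) :=
    cA.union_of_isClosed (cB.union_of_isClosed cC hB hC) hA (hB.union hC)
  have hT : IsClosed (A ∪ (B ∪ C)) := hA.union (hB.union hC)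
  let f : C(↥(A ∪ (B ∪ C)), Fin d → ℝ) := ⟨fun z => h z.1, continuousOn_iff_continuous_domRestrict.mp cT⟩
  have he : Topology.IsClosedEmbedding (fun z : ↥(A ∪ (B ∪ C)) => (z.1.1 : Ix d → ℝ)) :=
    (isClosed_OnS d).isClosedEmbedding_subtypeVal.comp hT.isClosedEmbedding_subtypeVal
  obtain ⟨g, hg⟩ := ContinuousMap.exists_extension' he f
  have hg' : ∀ z : YS d, z ∈ A ∪ (B ∪ C) → g z.1 = h z := fun z hz => congrFun hg ⟨z, hz⟩
  refine ⟨fun i z => g z i, fun i => by fun_prop, ?_, ?_, ?_⟩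
  · intro z hz ht i
    have hb : (⟨z, hz⟩ : YS d) ∈ B := ht
    have := hg' ⟨z, hz⟩ (Or.inr (Or.inl hb))
    rw [eB _ hb] at this
    exact congrFun this i
  · intro z hz ht i
    have hb : (⟨z, hz⟩ : YS d) ∈ C := ht
    have := hg' ⟨z, hz⟩ (Or.inr (Or.inr hb))
    rw [eC _ hb] at this
    exact congrFun this i
  · intro z hz i
    have := hg' z (Or.inl hz)
    rw [eA _ hz] at this
    exact congrFun this i

def xp {d : ℕ} (b : Fin 2) (z : YS d) : EuclideanSpace ℝ (Fin d) :=
  WithLp.toLp 2 (fun i => z.1 (Sum.inl (b, i)))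

theorem norm_xp {d : ℕ} (b : Fin 2) (z : YS d) : ‖xp b z‖ = 1 := by
  rw [EuclideanSpace.norm_eq]
  simp [xp, z.2 b]

theorem cont_xp {d : ℕ} (b : Fin 2) : Continuous (xp b : YS d → _) := by
  exact (PiLp.continuous_toLp 2 _).comp (continuous_pi fun i => cont_co _)

variable {n : ℕ}

def pt {d : ℕ} (φ : EuclideanSpace ℝ (Fin d) →ₗᵢ[ℝ] EuclideanSpace ℝ (Fin (n + 1)))
    (b : Fin 2) (z : YS d) : Sph n :=
  ⟨φ (xp b z), by rw [mem_sphere_zero_iff_norm, φ.norm_map, norm_xp]⟩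

theorem cont_pt {d : ℕ} (φ : EuclideanSpace ℝ (Fin d) →ₗᵢ[ℝ] EuclideanSpace ℝ (Fin (n + 1)))
    (b : Fin 2) : Continuous (pt φ b) :=
  Continuous.subtype_mk (φ.continuous.comp (cont_xp b)) _

theorem comp_phi {d : ℕ} (φ : EuclideanSpace ℝ (Fin d) →ₗᵢ[ℝ] EuclideanSpace ℝ (Fin (n + 1)))
    (x : EuclideanSpace ℝ (Fin d)) (i : Fin d) :
    inner ℝ (φ (EuclideanSpace.single i 1)) (φ x) = x i := by
  rw [φ.inner_map_map, EuclideanSpace.inner_single_left]; simp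

theorem lower {G : Type*} [Group G] (k : ℕ)
    (ρ : G →* (EuclideanSpace ℝ (Fin (n + 1)) ≃ₗᵢ[ℝ] EuclideanSpace ℝ (Fin (n + 1))))
    (φ : EuclideanSpace ℝ (Fin (k + 1)) →ₗᵢ[ℝ] EuclideanSpace ℝ (Fin (n + 1)))
    (hφ : ∀ x : Sph n, (∀ g : G, sphereAct ρ g x = x) ↔ ∃ y, φ y = x)
    (hk : Even k) (hc : invTCcover (sphereAct ρ) 2) : False := by
  obtain ⟨U, hUo, hUc, hU⟩ := hc
  let q : YS (k+1) → Sph n × Sph n := fun z => (pt φ 0 z, pt φ 1 z)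
  have hq : Continuous q := (cont_pt φ 0).prodMk (cont_pt φ 1)
  have hptf : ∀ b z, ∀ g, sphereAct ρ g (pt φ b z) = pt φ b z := fun b z =>
    (hφ (pt φ b z)).2 ⟨_, rfl⟩
  obtain ⟨A, hAu, hAc, hAs⟩ := exists_iUnion_eq_closed_subset (u := fun a => q ⁻¹' U a)
    (fun a => (hUo a).preimage hq) (fun x => Set.toFinite _) (by
      rw [← Set.preimage_iUnion, hUc, Set.preimage_univ])
  have key : ∀ a : Fin 2, ∃ H : Fin (k+1) → (Ix (k+1) → ℝ) → ℝ, (∀ i, Continuous (H i)) ∧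
      (∀ z, OnS z → z (Sum.inr a) ≤ 1/4 → ∀ i, H i z = z (Sum.inl (0, i))) ∧
      (∀ z, OnS z → 3/4 ≤ z (Sum.inr a) → ∀ i, H i z = z (Sum.inl (1, i))) ∧
      (∀ z ∈ A a, ∃ i, H i z.1 ≠ 0) := by
    intro a
    obtain ⟨-, s₁, s₂, c₁, c₂, hs, heq⟩ := hU a
    have fx : ∀ z ∈ A a, ∀ t g, sphereAct ρ g (s₁ (q z) t) = s₁ (q z) t ∧
        sphereAct ρ g (s₂ (q z) t) = s₂ (q z) t := by
      intro z hz t g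
      have := heq g g (q z) (hAs a hz) t
      have e : (sphereAct ρ g (q z).1, sphereAct ρ g (q z).2) = q z := by
        simp only [q, hptf]
      rw [e] at this
      exact ⟨this.1.symm, this.2.symm⟩
    have mid : ∀ z ∈ A a, s₁ (q z) 1 = s₂ (q z) 0 := by
      intro z hz
      have h3 := (hs (q z) (hAs a hz)).2.2
      have : s₁ (q z) 1 ∈ orbit (sphereAct ρ) (s₂ (q z) 0) := by
        rw [← h3]; exact ⟨1, (fx z hz 1 1).1⟩
      obtain ⟨g, hg⟩ := this
      rw [← hg, (fx z hz 0 g).2]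
    let P : ℝ → I := Set.projIcc 0 1 zero_le_one
    have hP : Continuous P := continuous_projIcc
    let Kv : YS (k+1) → EuclideanSpace ℝ (Fin (n + 1)) := fun z =>
      (s₁ (q z) (P (4 * z.1 (Sum.inr a) - 1)) : EuclideanSpace ℝ (Fin (n + 1)))
        + (s₂ (q z) (P (4 * z.1 (Sum.inr a) - 2)) : EuclideanSpace ℝ (Fin (n + 1)))
        - (s₁ (q z) 1 : EuclideanSpace ℝ (Fin (n + 1)))
    have P0 : ∀ t, t ≤ 0 → P t = 0 := fun t ht => Set.projIcc_of_le_left _ ht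
    have P1 : ∀ t, 1 ≤ t → P t = 1 := fun t ht => Set.projIcc_of_right_le _ ht
    have kA : ∀ z ∈ A a, z.1 (Sum.inr a) ≤ 1/2 → Kv z = s₁ (q z) (P (4 * z.1 (Sum.inr a) - 1)) := by
      intro z hz ht
      simp only [Kv]
      rw [P0 (4 * z.1 (Sum.inr a) - 2) (by linarith), mid z hz, add_sub_cancel_right]
    have kB : ∀ z ∈ A a, 1/2 ≤ z.1 (Sum.inr a) → Kv z = s₂ (q z) (P (4 * z.1 (Sum.inr a) - 2)) := by
      intro z hz ht
      simp only [Kv]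
      rw [P1 (4 * z.1 (Sum.inr a) - 1) (by linarith), add_sub_cancel_left]
    have cS₁ : ContinuousOn (fun z => s₁ (q z)) (A a) := c₁.comp hq.continuousOn (hAs a)
    have cS₂ : ContinuousOn (fun z => s₂ (q z)) (A a) := c₂.comp hq.continuousOn (hAs a)
    have cE : ∀ (S : YS (k+1) → C(I, Sph n)) (τ : YS (k+1) → I), ContinuousOn S (A a) → Continuous τ →
        ContinuousOn (fun z => (S z (τ z) : EuclideanSpace ℝ (Fin (n + 1)))) (A a) := by
      intro S τ hS hτ
      have : Continuous (fun p : C(I, Sph n) × I => (p.1 p.2 : EuclideanSpace ℝ (Fin (n + 1)))) := by fun_prop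
      exact this.comp_continuousOn (hS.prodMk hτ.continuousOn)
    have cK : ContinuousOn Kv (A a) :=
      ((cE _ _ cS₁ (hP.comp (((cont_co _).const_mul 4).sub continuous_const))).add (cE _ _ cS₂ (hP.comp (((cont_co _).const_mul 4).sub continuous_const)))).sub
        (cE _ _ cS₁ continuous_const)
    obtain ⟨H, hH, H0, H1, HA⟩ := ext_lemma (k+1) a (A a) (hAc a)
      (fun z i => inner ℝ (φ (EuclideanSpace.single i 1)) (Kv z))
      (continuousOn_pi.mpr fun i => ContinuousOn.inner (𝕜 := ℝ) continuousOn_const cK) (by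
        intro z hz ht i
        rw [kA z hz (by linarith), P0 _ (by linarith), (hs (q z) (hAs a hz)).1]
        exact comp_phi φ _ i) (by
        intro z hz ht i
        rw [kB z hz (by linarith), P1 _ (by linarith), (hs (q z) (hAs a hz)).2.1]
        exact comp_phi φ _ i)
    refine ⟨H, hH, H0, H1, fun z hz => ?_⟩
    have : ∃ w : Sph n, (∀ g : G, sphereAct ρ g w = w) ∧ Kv z = w := by
      rcases le_total (z.1 (Sum.inr a)) (1/2) with h | h
      · exact ⟨_, fun g => (fx z hz _ g).1, kA z hz h⟩
      · exact ⟨_, fun g => (fx z hz _ g).2, kB z hz h⟩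
    obtain ⟨w, hw, hKw⟩ := this
    obtain ⟨y, hy⟩ := (hφ w).1 hw
    by_contra hcon
    push Not at hcon
    have hy0 : y = 0 := by
      ext i
      have := hcon i
      rw [HA z hz i, hKw, ← hy, comp_phi] at this
      simpa using this
    have hw1 : ‖(w : EuclideanSpace ℝ (Fin (n + 1)))‖ = 1 := mem_sphere_zero_iff_norm.mp w.2
    rw [← hy, hy0] at hw1
    simp at hw1
  choose H hH H0 H1 HA using key
  refine core k hk H hH (fun z hz a => H0 a z hz) (fun z hz a => H1 a z hz) ?_
  intro z hz
  have : (⟨z, hz⟩ : YS (k+1)) ∈ ⋃ a, A a := by rw [hAu]; trivial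
  obtain ⟨a, ha⟩ := mem_iUnion.mp this
  exact ⟨a, HA a _ ha⟩

theorem cover_one_two {G : Type*}
    (act : G → Sph n → Sph n) (h : invTCcover act 1) : invTCcover act 2 := by
  obtain ⟨U, h1, h2, h3⟩ := h
  refine ⟨fun _ => U 0, fun _ => h1 0, ?_, fun _ => h3 0⟩
  rw [← h2]
  ext p
  simp

end
end PaperTC

/-- Let a finite group `G` act linearly on a `G`-connected sphere `S^n`
whose fixed point set is the great `k`-sphere obtained by intersecting `S^n` with a
pointwise-fixed linear subspace `V` of dimension `k + 1`, where `0 < k < n`.  If `k` is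
even, then `TC^G(S^n) = 3`. -/
theorem invTC_linear_sphere_eq_three_of_even {G : Type*} [Group G] [Finite G]
    (n k : ℕ) (hk : 0 < k) (hkn : k < n)
    (ρ : G →* (EuclideanSpace ℝ (Fin (n + 1)) ≃ₗᵢ[ℝ] EuclideanSpace ℝ (Fin (n + 1))))
    (hconn : ∀ H : Subgroup G, IsPathConnected (fixedSetOf (sphereAct ρ) (H : Set G)))
    (V : Submodule ℝ (EuclideanSpace ℝ (Fin (n + 1))))
    (hV : Module.finrank ℝ V = k + 1)
    (hVfix : ∀ g : G, ∀ v ∈ V, ρ g v = v)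
    (hfixV : ∀ x : ↥(Sph n),
      (∀ g : G, sphereAct ρ g x = x) ↔ (x : EuclideanSpace ℝ (Fin (n + 1))) ∈ V)
    (hkeven : Even k) :
    invTC (sphereAct ρ) = 3 := by
  obtain ⟨φ, hφ⟩ := exists_phi V k hV
  obtain ⟨a, hinj, haV⟩ := three_pts V k hk φ (fun x => (hφ _).2 ⟨x, rfl⟩)
  have hup := upper ρ a hinj (fun i g => hVfix g _ (haV i))
  have hlow : ¬ invTCcover (sphereAct ρ) 2 := fun h =>
    lower k ρ φ (fun x => (hfixV x).trans (hφ _)) hkeven h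
  unfold invTC minCover
  apply le_antisymm
  · exact sInf_le ⟨3, rfl, by norm_num, hup⟩
  · refine le_sInf ?_
    rintro _ ⟨m, rfl, hm, hP⟩
    have : 3 ≤ m := by
      by_contra hlt
      have : m = 1 ∨ m = 2 := by omega
      rcases this with rfl | rfl
      · exact hlow (cover_one_two _ hP)
      · exact hlow hP
    exact_mod_cast this
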